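/- Posterior risk bound on the large-threshold event (Cauchy slab): for every real μ, with B = {t̂ > t_n} where t̂ = t(ĥα) and t_n² = 2·log n − 5·log log n, and with α_A = t^{−1}(t_A), t_A = √(2(1+A)·log n), one has for x ~ N(μ,1): E_μ[r_2(α_A, μ, x)·1_B] ≤ C·(t_A² + 1)·P(B)^{1/2} for a universal constant C. -/

import Mathlib

/-!
Statement 13: posterior risk bound on the large-threshold event, for the
spike and Cauchy slab prior with the modified empirical Bayes estimator.
-/

open MeasureTheory Real Set

noncomputable section

/-- Standard Cauchy density. -/
def cauchyDen (x : ℝ) : ℝ := (Real.pi * (1 + x ^ 2))⁻¹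


/-- Standard normal density. -/
def phi (x : ℝ) : ℝ := Real.exp (-x ^ 2 / 2) / Real.sqrt (2 * Real.pi)

/-- Standard Laplace density. -/
def lapDen (x : ℝ) : ℝ := Real.exp (-|x|) / 2

/-- Convolution `g = φ * γ`. -/
def conv (γ : ℝ → ℝ) (x : ℝ) : ℝ := ∫ u, phi (x - u) * γ u

/-- Posterior weight `a(x) = α g(x) / ((1-α) φ(x) + α g(x))`. -/
def aWt (γ : ℝ → ℝ) (α x : ℝ) : ℝ :=
  α * conv γ x / ((1 - α) * phi x + α * conv γ x)

/-- Density of the single-coordinate posterior with respect to `volume + δ₀`: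
the point mass `1 - a(x)` at `0`, and the continuous part `a(x) γ_x`. -/
def coordDen (γ : ℝ → ℝ) (α x u : ℝ) : ℝ :=
  if u = 0 then 1 - aWt γ α x else aWt γ α x * (phi (x - u) * γ u / conv γ x)

/-- Single-coordinate posterior `(1 - a(x)) δ₀ + a(x) G_x`. -/
def coordPost (γ : ℝ → ℝ) (α x : ℝ) : Measure ℝ :=
  (volume + Measure.dirac (0 : ℝ)).withDensity fun u => ENNReal.ofReal (coordDen γ α x u)

/-- The spike and slab posterior `Π_α[· | X]` on `ℝⁿ`, for a fixed weight `α`. -/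
def post (γ : ℝ → ℝ) (n : ℕ) (α : ℝ) (X : Fin n → ℝ) : Measure (Fin n → ℝ) :=
  Measure.pi fun i => coordPost γ α (X i)

/-- Law `P_θ` of the data `X`, `X_i = θ_i + ε_i` with `ε_i` i.i.d. `N(0,1)`. -/
def Pdata (n : ℕ) (θ : Fin n → ℝ) : Measure (Fin n → ℝ) :=
  Measure.pi fun i => ProbabilityTheory.gaussianReal (θ i) 1

/-- The class `ℓ₀[s]` of `s`-sparse vectors. -/
def ell0 (n s : ℕ) : Set (Fin n → ℝ) := {θ | Nat.card {i : Fin n // θ i ≠ 0} ≤ s}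

/-- Log-marginal likelihood `ℓ_n(α; X)`. -/
def logMarg (γ : ℝ → ℝ) {n : ℕ} (α : ℝ) (X : Fin n → ℝ) : ℝ :=
  ∑ i, Real.log ((1 - α) * phi (X i) + α * conv γ (X i))

/-- `0` is a median of the single-coordinate posterior distribution. -/
def medianZero (γ : ℝ → ℝ) (α x : ℝ) : Prop :=
  2⁻¹ ≤ coordPost γ α x (Set.Iic 0) ∧ 2⁻¹ ≤ coordPost γ α x (Set.Ici 0)

/-- `t` is the posterior median threshold function: for each `α ∈ (0,1)`,
`t α > 0` and the posterior median at observation `x` is `0` iff `|x| ≤ t α`. -/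
def IsThreshold (γ : ℝ → ℝ) (t : ℝ → ℝ) : Prop :=
  ∀ α ∈ Set.Ioo (0 : ℝ) 1, 0 < t α ∧ ∀ x : ℝ, (medianZero γ α x ↔ |x| ≤ t α)

/-- `hahat` is a marginal maximum likelihood empirical Bayes estimator of `α`,
with maximisation restricted to `[αn, 1]`. -/
def IsMMLE (γ : ℝ → ℝ) {n : ℕ} (αn : ℝ) (hahat : (Fin n → ℝ) → ℝ) : Prop :=
  Measurable hahat ∧ ∀ X : Fin n → ℝ, hahat X ∈ Set.Icc αn 1 ∧
    ∀ α ∈ Set.Icc αn 1, logMarg γ α X ≤ logMarg γ (hahat X) X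

/-- Expected posterior squared `L²`-moment
`E_{θ₀} ∫ ‖θ - θ₀‖² dΠ_{ĥα}(θ | X)` for the plug-in posterior. -/
def postRisk (γ : ℝ → ℝ) {n : ℕ} (hahat : (Fin n → ℝ) → ℝ) (θ0 : Fin n → ℝ) : ℝ :=
  ∫ X, (∫ θ, (∑ i, (θ i - θ0 i) ^ 2) ∂(post γ n (hahat X) X)) ∂(Pdata n θ0)

/-- Posterior second moment `r₂(α, μ, x) = ∫ (u - μ)² dπ_α(u|x)`. -/
def r2 (γ : ℝ → ℝ) (α μ x : ℝ) : ℝ := ∫ u, (u - μ) ^ 2 ∂(coordPost γ α x)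

/-!
Write `X ~ N(μ, 1)`. The posterior is a mixture of a spike at `0` with weight `1 - a(X)` and a slab
component. Since `log γ` is Lipschitz, smoothing by the normal density keeps `g` log-Lipschitz and
concentrates the slab component within `O(1)` of `X` in mean square. The spike costs
`(1 - a(X)) μ² ≤ 2 (X - μ)² + 2 (1 - a(X)) X²`. If `|X| ≤ 2τ` the last term is at most `8τ²`. If
`|X| > 2τ`, the posterior median at `X / 2` is nonzero, hence `(1 - α) φ(X/2) < α g(X/2)`; passing
from `X / 2` to `X` gains the factor `exp (-3X²/8)` in `φ` and loses only `exp (Λ|X|/2)` in `g`, so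
`(1 - a(X)) X²` is bounded. Therefore `r₂ ≤ c (τ² + 1) + 4 (X - μ)²`, a bound that integrates over
any event `B` by Cauchy–Schwarz.
-/

section

open ProbabilityTheory
open scoped NNReal

variable {γ : ℝ → ℝ} {Λ : ℝ≥0} {α μ τ x : ℝ}

/-! ### Gaussian integrals -/

lemma phi_pos (x : ℝ) : 0 < phi x := by
  unfold phi; positivity

lemma continuous_phi : Continuous phi := by
  unfold phi; fun_prop

lemma phi_eq_exp_mul_phi_half (x : ℝ) : phi x = exp (-(3 * x ^ 2 / 8)) * phi (x / 2) := by
  unfold phi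
  rw [mul_div_assoc', ← exp_add]
  ring_nf

lemma gaussianPDFReal_one_eq_phi_sub (x u : ℝ) : gaussianPDFReal x 1 u = phi (x - u) := by
  simp only [gaussianPDFReal, phi, NNReal.coe_one, mul_one]
  rw [inv_mul_eq_div, sub_sq_comm]

lemma measurePreserving_const_add_gaussianReal (x : ℝ) :
    MeasurePreserving (x + ·) (gaussianReal 0 1) (gaussianReal x 1) where
  measurable := measurable_const_add x
  map_eq := by rw [gaussianReal_map_const_add, zero_add]

lemma integral_phi_sub_mul (x : ℝ) (f : ℝ → ℝ) :
    ∫ u, phi (x - u) * f u = ∫ z, f (x + z) ∂gaussianReal 0 1 := by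
  rw [(measurePreserving_const_add_gaussianReal x).integral_comp (measurableEmbedding_addLeft x) f,
    integral_gaussianReal_eq_integral_smul one_ne_zero]
  simp only [gaussianPDFReal_one_eq_phi_sub, smul_eq_mul]

lemma integrable_phi_sub_mul_iff (x : ℝ) (f : ℝ → ℝ) :
    Integrable (fun u => phi (x - u) * f u) ↔
      Integrable (fun z => f (x + z)) (gaussianReal 0 1) := by
  rw [← Function.comp_def f, (measurePreserving_const_add_gaussianReal x).integrable_comp_emb
      (measurableEmbedding_addLeft x), gaussianReal_of_var_ne_zero x one_ne_zero,
    integrable_withDensity_iff_integrable_smul' (measurable_gaussianPDF x 1)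
      (ae_of_all _ fun _ => gaussianPDF_lt_top)]
  simp only [toReal_gaussianPDF, gaussianPDFReal_one_eq_phi_sub, smul_eq_mul]

/-- The moment `E[|Z|ᵏ exp (c |Z|)]` of a standard normal variable `Z`, which bounds the moments of
the slab component of the posterior. -/
def gaussianExpMoment (k : ℕ) (c : ℝ) : ℝ :=
  ∫ z, |z| ^ k * exp (c * |z|) ∂gaussianReal 0 1

lemma integrable_abs_pow_mul_exp_mul_abs_gaussianReal (k : ℕ) (c : ℝ) :
    Integrable (fun z => |z| ^ k * exp (c * |z|)) (gaussianReal 0 1) := by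
  have dominating : Integrable (fun z => |z| ^ k * exp (0 * z + |c| * |z|)) (gaussianReal 0 1) :=
    integrable_pow_abs_mul_exp_add_of_integrable_exp_mul (X := fun z => z) (t := |c| + 1)
      (integrable_exp_mul_gaussianReal _) (integrable_exp_mul_gaussianReal _) (abs_nonneg c)
      (lt_of_lt_of_le (lt_add_one _) (le_abs_self _)) k
  refine dominating.mono' (by fun_prop) (ae_of_all _ fun z => ?_)
  rw [Real.norm_of_nonneg (by positivity), zero_mul, zero_add]
  gcongr
  exact le_abs_self c

lemma gaussianExpMoment_pos (k : ℕ) (c : ℝ) : 0 < gaussianExpMoment k c := by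
  refine (integral_pos_iff_support_of_nonneg (fun z => by positivity)
    (integrable_abs_pow_mul_exp_mul_abs_gaussianReal k c)).2 ?_
  have : ({0}ᶜ : Set ℝ) ⊆ Function.support fun z => |z| ^ k * exp (c * |z|) := fun z hz =>
    (mul_pos (pow_pos (abs_pos.2 hz) k) (exp_pos _)).ne'
  refine lt_of_lt_of_le ?_ (measure_mono this)
  have := nullSingletonClass_gaussianReal (μ := 0) (one_ne_zero (α := ℝ≥0))
  rw [prob_compl_eq_one_sub (measurableSet_singleton _), measure_singleton]
  simp

/-! ### Log-Lipschitz slabs -/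

/-- Slab functions in the sense of Johnstone and Silverman: positive, with `log γ` Lipschitz.
Both the Cauchy and the Laplace density satisfy this with `Λ = 1`. Since only ratios of values
of `γ` matter in the posterior, `γ` is not required to have integral `1`. -/
structure IsLogLipschitz (γ : ℝ → ℝ) (Λ : ℝ≥0) : Prop where
  pos : ∀ x, 0 < γ x
  lipschitzWith_log : LipschitzWith Λ fun x => log (γ x)

namespace IsLogLipschitz

lemma le_exp_mul (h : IsLogLipschitz γ Λ) (x y : ℝ) : γ x ≤ exp (Λ * |x - y|) * γ y := by
  have hlog : log (γ x) - log (γ y) ≤ Λ * |x - y| :=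
    (le_abs_self _).trans (h.lipschitzWith_log.dist_le_mul x y)
  rw [← log_le_log_iff (h.pos x) (mul_pos (exp_pos _) (h.pos y)),
    log_mul (exp_ne_zero _) (h.pos y).ne', log_exp]
  linarith

lemma continuous (h : IsLogLipschitz γ Λ) : Continuous γ := by
  simpa only [exp_log (h.pos _)] using h.lipschitzWith_log.continuous.rexp

lemma integrable_pow_mul_add (h : IsLogLipschitz γ Λ) (k : ℕ) (x : ℝ) :
    Integrable (fun z => z ^ k * γ (x + z)) (gaussianReal 0 1) := by
  have := h.continuous
  refine ((integrable_abs_pow_mul_exp_mul_abs_gaussianReal k Λ).mul_const (γ x)).mono'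
    (by fun_prop) (ae_of_all _ fun z => ?_)
  have hγ := h.le_exp_mul (x + z) x
  rw [add_sub_cancel_left] at hγ
  rw [norm_mul, norm_pow, Real.norm_eq_abs, Real.norm_of_nonneg (h.pos _).le, mul_assoc]
  gcongr

lemma integrable_add (h : IsLogLipschitz γ Λ) (x : ℝ) :
    Integrable (fun z => γ (x + z)) (gaussianReal 0 1) := by
  simpa using h.integrable_pow_mul_add 0 x

end IsLogLipschitz

lemma conv_eq_integral_gaussianReal (γ : ℝ → ℝ) (x : ℝ) :
    conv γ x = ∫ z, γ (x + z) ∂gaussianReal 0 1 :=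
  integral_phi_sub_mul x γ

namespace IsLogLipschitz

lemma conv_le_exp_mul (h : IsLogLipschitz γ Λ) (x y : ℝ) :
    conv γ x ≤ exp (Λ * |x - y|) * conv γ y := by
  simp only [conv_eq_integral_gaussianReal, ← integral_const_mul]
  refine integral_mono (h.integrable_add x) ((h.integrable_add y).const_mul _) fun z => ?_
  simpa only [add_sub_add_right_eq_sub] using h.le_exp_mul (x + z) (y + z)

lemma mul_gaussianExpMoment_le_conv (h : IsLogLipschitz γ Λ) (x : ℝ) :
    γ x * gaussianExpMoment 0 (-Λ) ≤ conv γ x := by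
  rw [conv_eq_integral_gaussianReal, gaussianExpMoment, ← integral_const_mul]
  refine integral_mono ((integrable_abs_pow_mul_exp_mul_abs_gaussianReal 0 _).const_mul _)
    (h.integrable_add x) fun z => ?_
  have hγ := h.le_exp_mul x (x + z)
  rw [sub_add_cancel_left, abs_neg] at hγ
  rwa [pow_zero, one_mul, neg_mul, exp_neg, ← div_eq_mul_inv, div_le_iff₀' (exp_pos _)]

lemma conv_pos (h : IsLogLipschitz γ Λ) (x : ℝ) : 0 < conv γ x :=
  (mul_pos (h.pos x) (gaussianExpMoment_pos 0 _)).trans_le (h.mul_gaussianExpMoment_le_conv x)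

lemma integral_sq_mul_add_le (h : IsLogLipschitz γ Λ) (x : ℝ) :
    ∫ z, z ^ 2 * γ (x + z) ∂gaussianReal 0 1 ≤ γ x * gaussianExpMoment 2 Λ := by
  rw [gaussianExpMoment, ← integral_const_mul]
  refine integral_mono (h.integrable_pow_mul_add 2 x)
    ((integrable_abs_pow_mul_exp_mul_abs_gaussianReal 2 _).const_mul _) fun z => ?_
  have hγ := h.le_exp_mul (x + z) x
  rw [add_sub_cancel_left] at hγ
  calc z ^ 2 * γ (x + z) ≤ z ^ 2 * (exp (Λ * |z|) * γ x) := by gcongr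
    _ = γ x * (|z| ^ 2 * exp (Λ * |z|)) := by rw [sq_abs]; ring

end IsLogLipschitz

/-- A bound, uniform in the observation `x`, for the mean square distance to `x` under the slab
component `γ_x` of the posterior. -/
def slabSpread (Λ : ℝ≥0) : ℝ :=
  gaussianExpMoment 2 Λ / gaussianExpMoment 0 (-Λ)

lemma slabSpread_pos (Λ : ℝ≥0) : 0 < slabSpread Λ :=
  div_pos (gaussianExpMoment_pos _ _) (gaussianExpMoment_pos _ _)

namespace IsLogLipschitz

lemma integral_sq_mul_add_le_slabSpread_mul_conv (h : IsLogLipschitz γ Λ) (x : ℝ) :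
    ∫ z, z ^ 2 * γ (x + z) ∂gaussianReal 0 1 ≤ slabSpread Λ * conv γ x := by
  calc ∫ z, z ^ 2 * γ (x + z) ∂gaussianReal 0 1
      ≤ γ x * gaussianExpMoment 2 Λ := h.integral_sq_mul_add_le x
    _ = slabSpread Λ * (γ x * gaussianExpMoment 0 (-Λ)) := by
        have := (gaussianExpMoment_pos 0 (-Λ)).ne'
        unfold slabSpread
        field_simp
    _ ≤ slabSpread Λ * conv γ x :=
        mul_le_mul_of_nonneg_left (h.mul_gaussianExpMoment_le_conv x) (slabSpread_pos Λ).le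

lemma integrable_sq_sub_mul_add (h : IsLogLipschitz γ Λ) (μ x : ℝ) :
    Integrable (fun z => (x + z - μ) ^ 2 * γ (x + z)) (gaussianReal 0 1) := by
  have := (((h.integrable_add x).const_mul ((x - μ) ^ 2)).add
    ((h.integrable_pow_mul_add 1 x).const_mul (2 * (x - μ)))).add (h.integrable_pow_mul_add 2 x)
  refine this.congr (ae_of_all _ fun z => ?_)
  simp only [Pi.add_apply]
  ring

lemma integral_sq_sub_mul_add_le (h : IsLogLipschitz γ Λ) (μ x : ℝ) :
    ∫ z, (x + z - μ) ^ 2 * γ (x + z) ∂gaussianReal 0 1 ≤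
      (2 * (x - μ) ^ 2 + 2 * slabSpread Λ) * conv γ x := by
  calc ∫ z, (x + z - μ) ^ 2 * γ (x + z) ∂gaussianReal 0 1
      ≤ ∫ z, (2 * (x - μ) ^ 2 * γ (x + z) + 2 * (z ^ 2 * γ (x + z))) ∂gaussianReal 0 1 := by
        refine integral_mono (h.integrable_sq_sub_mul_add μ x)
          (((h.integrable_add x).const_mul _).add ((h.integrable_pow_mul_add 2 x).const_mul _))
          fun z => ?_
        have hsq : (x + z - μ) ^ 2 ≤ 2 * (x - μ) ^ 2 + 2 * z ^ 2 := by
          linarith [sq_nonneg (x - μ - z)]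
        simpa only [add_mul, mul_assoc] using mul_le_mul_of_nonneg_right hsq (h.pos (x + z)).le
    _ = 2 * (x - μ) ^ 2 * conv γ x + 2 * ∫ z, z ^ 2 * γ (x + z) ∂gaussianReal 0 1 := by
        rw [integral_add ((h.integrable_add x).const_mul _)
          ((h.integrable_pow_mul_add 2 x).const_mul _), integral_const_mul, integral_const_mul,
          conv_eq_integral_gaussianReal]
    _ ≤ (2 * (x - μ) ^ 2 + 2 * slabSpread Λ) * conv γ x := by
        linarith [h.integral_sq_mul_add_le_slabSpread_mul_conv x]

/-! ### The single-coordinate posterior -/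

lemma marginal_pos (h : IsLogLipschitz γ Λ) (hα : α ∈ Icc 0 1) (x : ℝ) :
    0 < (1 - α) * phi x + α * conv γ x := by
  have hφ := phi_pos x
  have hg := h.conv_pos x
  rcases hα.1.eq_or_lt with rfl | hα0
  · simpa using hφ
  · have := sub_nonneg.2 hα.2
    positivity

lemma aWt_mem_Icc (h : IsLogLipschitz γ Λ) (hα : α ∈ Icc 0 1) (x : ℝ) :
    aWt γ α x ∈ Icc 0 1 := by
  have hspike : 0 ≤ (1 - α) * phi x := mul_nonneg (sub_nonneg.2 hα.2) (phi_pos x).le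
  have hslab : 0 ≤ α * conv γ x := mul_nonneg hα.1 (h.conv_pos x).le
  exact ⟨by unfold aWt; positivity, div_le_one_of_le₀ (by linarith) (by positivity)⟩

lemma one_sub_aWt_le (h : IsLogLipschitz γ Λ) (hα : α ∈ Icc 0 1) {r : ℝ} (hr : 0 ≤ r)
    (hle : (1 - α) * phi x ≤ r * (α * conv γ x)) : 1 - aWt γ α x ≤ r := by
  have hspike : 0 ≤ (1 - α) * phi x := mul_nonneg (sub_nonneg.2 hα.2) (phi_pos x).le
  have hm := h.marginal_pos hα x
  rw [aWt, one_sub_div hm.ne', add_sub_cancel_right, div_le_iff₀ hm]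
  exact hle.trans (mul_le_mul_of_nonneg_left (by linarith) hr)

lemma coordDen_nonneg (h : IsLogLipschitz γ Λ) (hα : α ∈ Icc 0 1) (x u : ℝ) :
    0 ≤ coordDen γ α x u := by
  obtain ⟨ha0, ha1⟩ := h.aWt_mem_Icc hα x
  have hφ := phi_pos (x - u)
  have hγ := h.pos u
  have hg := h.conv_pos x
  unfold coordDen
  split_ifs
  · exact sub_nonneg.2 ha1
  · positivity

lemma measurable_coordDen (h : IsLogLipschitz γ Λ) (α x : ℝ) : Measurable (coordDen γ α x) := by
  have := continuous_phi
  have := h.continuous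
  exact Measurable.ite (measurableSet_singleton 0) measurable_const
    (Continuous.measurable (by fun_prop))

lemma integral_coordPost (h : IsLogLipschitz γ Λ) (hα : α ∈ Icc 0 1) {f : ℝ → ℝ}
    (hf : Integrable (fun z => f (x + z) * γ (x + z)) (gaussianReal 0 1)) :
    ∫ u, f u ∂coordPost γ α x = (1 - aWt γ α x) * f 0 +
      aWt γ α x * ((∫ z, f (x + z) * γ (x + z) ∂gaussianReal 0 1) / conv γ x) := by
  set w : ℝ := aWt γ α x / conv γ x with hw
  have hslab : (fun u => coordDen γ α x u * f u) =ᵐ[volume]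
      fun u => w * (phi (x - u) * (f u * γ u)) := by
    filter_upwards [Measure.ae_ne volume (0 : ℝ)] with u hu
    rw [coordDen, if_neg hu, hw]
    ring
  have hf' := ((integrable_phi_sub_mul_iff x fun u => f u * γ u).2 hf).const_mul w
  calc ∫ u, f u ∂coordPost γ α x
      = ∫ u, coordDen γ α x u * f u ∂(volume + Measure.dirac 0) := by
        rw [coordPost, integral_withDensity_eq_integral_toReal_smul
          (h.measurable_coordDen α x).ennreal_ofReal (ae_of_all _ fun _ => ENNReal.ofReal_lt_top)]
        simp only [ENNReal.toReal_ofReal (h.coordDen_nonneg hα x _), smul_eq_mul]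
    _ = w * (∫ u, phi (x - u) * (f u * γ u)) + coordDen γ α x 0 * f 0 := by
        rw [integral_add_measure (hf'.congr hslab.symm) (integrable_dirac enorm_lt_top),
          integral_dirac, integral_congr_ae hslab, integral_const_mul]
    _ = _ := by
        rw [integral_phi_sub_mul x fun u => f u * γ u, coordDen, if_pos rfl, hw]
        ring

lemma r2_eq (h : IsLogLipschitz γ Λ) (hα : α ∈ Icc 0 1) (μ x : ℝ) :
    r2 γ α μ x = (1 - aWt γ α x) * μ ^ 2 +
      aWt γ α x * ((∫ z, (x + z - μ) ^ 2 * γ (x + z) ∂gaussianReal 0 1) / conv γ x) := by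
  rw [r2, h.integral_coordPost hα (h.integrable_sq_sub_mul_add μ x), zero_sub, neg_sq]

lemma r2_le (h : IsLogLipschitz γ Λ) (hα : α ∈ Icc 0 1) (μ x : ℝ) :
    r2 γ α μ x ≤ (1 - aWt γ α x) * μ ^ 2 + (2 * (x - μ) ^ 2 + 2 * slabSpread Λ) := by
  obtain ⟨ha0, ha1⟩ := h.aWt_mem_Icc hα x
  have hR := slabSpread_pos Λ
  have hslab : (∫ z, (x + z - μ) ^ 2 * γ (x + z) ∂gaussianReal 0 1) / conv γ x ≤
      2 * (x - μ) ^ 2 + 2 * slabSpread Λ :=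
    (div_le_iff₀ (h.conv_pos x)).2 (h.integral_sq_sub_mul_add_le μ x)
  rw [h.r2_eq hα]
  gcongr
  calc _ ≤ aWt γ α x * (2 * (x - μ) ^ 2 + 2 * slabSpread Λ) := by gcongr
    _ ≤ _ := mul_le_of_le_one_left (by positivity) ha1

end IsLogLipschitz

/-! ### The spike beyond the threshold -/

lemma coordPost_singleton_zero (γ : ℝ → ℝ) (α x : ℝ) :
    coordPost γ α x {0} = ENNReal.ofReal (1 - aWt γ α x) := by
  rw [coordPost, withDensity_apply _ (measurableSet_singleton 0), Measure.restrict_singleton,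
    lintegral_smul_measure, lintegral_dirac]
  simp [coordDen]

lemma medianZero_of_aWt_le_half (ha : aWt γ α x ≤ 1 / 2) : medianZero γ α x := by
  have hmass : 2⁻¹ ≤ coordPost γ α x {0} := by
    rw [coordPost_singleton_zero, ← ENNReal.ofReal_ofNat 2,
      ← ENNReal.ofReal_inv_of_pos zero_lt_two]
    exact ENNReal.ofReal_le_ofReal (by linarith)
  exact ⟨hmass.trans (measure_mono (by simp)), hmass.trans (measure_mono (by simp))⟩

lemma sq_mul_exp_le (x c : ℝ) :
    x ^ 2 * exp (-(3 * x ^ 2 / 8) + c * |x| / 2) ≤ 4 * exp (c ^ 2 / 2) := by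
  have hexponent : -(3 * x ^ 2 / 8) + c * |x| / 2 ≤ c ^ 2 / 2 - x ^ 2 / 4 := by
    linarith [sq_nonneg (|x| - 2 * c), sq_abs x]
  have hx : x ^ 2 ≤ 4 * exp (x ^ 2 / 4) := by linarith [add_one_le_exp (x ^ 2 / 4)]
  calc x ^ 2 * exp (-(3 * x ^ 2 / 8) + c * |x| / 2)
      ≤ 4 * exp (x ^ 2 / 4) * exp (c ^ 2 / 2 - x ^ 2 / 4) := by gcongr
    _ = 4 * exp (c ^ 2 / 2) := by rw [mul_assoc, ← exp_add, add_sub_cancel]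

namespace IsLogLipschitz

lemma mul_phi_lt_of_not_medianZero (h : IsLogLipschitz γ Λ) (hα : α ∈ Icc 0 1)
    (hx : ¬medianZero γ α x) : (1 - α) * phi x < α * conv γ x := by
  have ha : 1 / 2 < aWt γ α x := not_le.1 (mt medianZero_of_aWt_le_half hx)
  rw [aWt, lt_div_iff₀ (h.marginal_pos hα x)] at ha
  linarith

lemma one_sub_aWt_le_exp (h : IsLogLipschitz γ Λ) (hα : α ∈ Icc 0 1)
    (hx : ¬medianZero γ α (x / 2)) :
    1 - aWt γ α x ≤ exp (-(3 * x ^ 2 / 8) + Λ * |x| / 2) := by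
  have hα0 : 0 ≤ α := hα.1
  have hg : conv γ (x / 2) ≤ exp (Λ * |x| / 2) * conv γ x := by
    convert h.conv_le_exp_mul (x / 2) x using 3
    rw [show x / 2 - x = -(x / 2) by ring, abs_neg, abs_div, abs_two, mul_div_assoc]
  refine h.one_sub_aWt_le hα (exp_pos _).le ?_
  calc (1 - α) * phi x = exp (-(3 * x ^ 2 / 8)) * ((1 - α) * phi (x / 2)) := by
        rw [phi_eq_exp_mul_phi_half]; ring
    _ ≤ exp (-(3 * x ^ 2 / 8)) * (α * conv γ (x / 2)) := by
        gcongr ?_ * ?_; exact (h.mul_phi_lt_of_not_medianZero hα hx).le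
    _ ≤ exp (-(3 * x ^ 2 / 8)) * (α * (exp (Λ * |x| / 2) * conv γ x)) := by gcongr
    _ = exp (-(3 * x ^ 2 / 8) + Λ * |x| / 2) * (α * conv γ x) := by rw [exp_add]; ring

lemma one_sub_aWt_mul_sq_le (h : IsLogLipschitz γ Λ) (hα : α ∈ Icc 0 1)
    (hτ : ∀ y, medianZero γ α y → |y| ≤ τ) (x : ℝ) :
    (1 - aWt γ α x) * x ^ 2 ≤ 4 * τ ^ 2 + 4 * exp (Λ ^ 2 / 2) := by
  by_cases hx : medianZero γ α (x / 2)
  · have hxτ : x ^ 2 ≤ 4 * τ ^ 2 := by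
      linarith [sq_le_sq' (neg_le_of_abs_le (hτ _ hx)) (le_of_abs_le (hτ _ hx))]
    calc (1 - aWt γ α x) * x ^ 2 ≤ x ^ 2 :=
          mul_le_of_le_one_left (sq_nonneg x) (sub_le_self _ (h.aWt_mem_Icc hα x).1)
      _ ≤ 4 * τ ^ 2 + 4 * exp (Λ ^ 2 / 2) := hxτ.trans (le_add_of_nonneg_right (by positivity))
  · calc (1 - aWt γ α x) * x ^ 2
        ≤ exp (-(3 * x ^ 2 / 8) + Λ * |x| / 2) * x ^ 2 := by
          gcongr; exact h.one_sub_aWt_le_exp hα hx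
      _ ≤ 4 * exp (Λ ^ 2 / 2) := by rw [mul_comm]; exact sq_mul_exp_le x Λ
      _ ≤ 4 * τ ^ 2 + 4 * exp (Λ ^ 2 / 2) := le_add_of_nonneg_left (by positivity)

lemma r2_le_of_medianZero_imp (h : IsLogLipschitz γ Λ) (hα : α ∈ Icc 0 1)
    (hτ : ∀ y, medianZero γ α y → |y| ≤ τ) (μ x : ℝ) :
    r2 γ α μ x ≤
      8 * τ ^ 2 + 8 * exp (Λ ^ 2 / 2) + 2 * slabSpread Λ + 4 * (x - μ) ^ 2 := by
  obtain ⟨ha0, ha1⟩ := h.aWt_mem_Icc hα x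
  have hμ : μ ^ 2 ≤ 2 * (x - μ) ^ 2 + 2 * x ^ 2 := by linarith [sq_nonneg (2 * x - μ)]
  have hspike : (1 - aWt γ α x) * μ ^ 2 ≤
      2 * (x - μ) ^ 2 + 2 * ((1 - aWt γ α x) * x ^ 2) := by
    have := mul_le_mul_of_nonneg_left hμ (sub_nonneg.2 ha1)
    have := mul_nonneg ha0 (sq_nonneg (x - μ))
    linarith
  linarith [h.r2_le hα μ x, h.one_sub_aWt_mul_sq_le hα hτ x]

end IsLogLipschitz

/-! ### Integration over the event -/

variable {Ω : Type*} {mΩ : MeasurableSpace Ω} {P : Measure Ω} {ξ : Ω → ℝ}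

lemma setIntegral_le_sqrt_integral_sq_mul_sqrt [IsFiniteMeasure P] {f : Ω → ℝ} (hf : MemLp f 2 P)
    (B : Set Ω) : ∫ ω in B, f ω ∂P ≤ √(∫ ω, f ω ^ 2 ∂P) * √(P.real B) := by
  have hölder := integral_mul_norm_le_Lp_mul_Lq (μ := P.restrict B) (f := f) (g := fun _ => (1 : ℝ))
    Real.HolderConjugate.two_two (by simpa using hf.restrict B) (memLp_const 1)
  simp only [norm_one, mul_one, integral_const, smul_eq_mul, rpow_two, one_pow,
    Real.norm_eq_abs, sq_abs, measureReal_restrict_apply_univ, ← sqrt_eq_rpow] at hölder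
  calc ∫ ω in B, f ω ∂P ≤ ∫ ω in B, |f ω| ∂P :=
        (le_abs_self _).trans abs_integral_le_integral_abs
    _ ≤ √(∫ ω in B, f ω ^ 2 ∂P) * √(P.real B) := hölder
    _ ≤ √(∫ ω, f ω ^ 2 ∂P) * √(P.real B) := by
        gcongr √?_ * _
        exact setIntegral_le_integral hf.integrable_sq (ae_of_all _ fun _ => sq_nonneg _)

/-- The fourth moment of the standard normal distribution. -/
def gaussianFourthMoment : ℝ :=
  ∫ z, z ^ 4 ∂gaussianReal 0 1

lemma integral_pow_four_sub_eq (hξ : HasLaw ξ (gaussianReal μ 1) P) :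
    ∫ ω, (ξ ω - μ) ^ 4 ∂P = gaussianFourthMoment := by
  have hZ := gaussianReal_sub_const hξ μ
  rw [sub_self] at hZ
  exact hZ.integral_comp (f := fun z => z ^ 4) (by fun_prop)

lemma memLp_two_sq_sub (hξ : HasLaw ξ (gaussianReal μ 1) P) :
    MemLp (fun ω => (ξ ω - μ) ^ 2) 2 P := by
  have hZ := gaussianReal_sub_const hξ μ
  rw [sub_self] at hZ
  have hsq : MemLp (fun z => z ^ 2) 2 (gaussianReal 0 1) := by
    refine (memLp_two_iff_integrable_sq (by fun_prop)).2 ?_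
    simpa [← pow_mul, Even.pow_abs (show Even 4 by decide)] using
      integrable_abs_pow_mul_exp_mul_abs_gaussianReal 4 0
  rw [← hZ.map_eq] at hsq
  exact hsq.comp_of_map hZ.aemeasurable

lemma setIntegral_sq_sub_le (hξ : HasLaw ξ (gaussianReal μ 1) P) (B : Set Ω) :
    ∫ ω in B, (ξ ω - μ) ^ 2 ∂P ≤ √gaussianFourthMoment * √(P.real B) := by
  have := hξ.isProbabilityMeasure
  simpa only [← pow_mul, integral_pow_four_sub_eq hξ] using
    setIntegral_le_sqrt_integral_sq_mul_sqrt (memLp_two_sq_sub hξ) B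

/-- The constant of the risk bound for slabs with `log γ` Lipschitz of constant `Λ`: the first three
terms come from the pointwise bound on `r₂`, the last one from the Gaussian noise. -/
def riskConst (Λ : ℝ≥0) : ℝ :=
  8 + 8 * exp (Λ ^ 2 / 2) + 2 * slabSpread Λ + 4 * √gaussianFourthMoment

lemma riskConst_pos (Λ : ℝ≥0) : 0 < riskConst Λ := by
  have := slabSpread_pos Λ
  unfold riskConst
  positivity

theorem risk_bound_large_threshold_event_general (h : IsLogLipschitz γ Λ) (hα : α ∈ Icc 0 1)
    (hτ : ∀ y, medianZero γ α y → |y| ≤ τ) (hξ : HasLaw ξ (gaussianReal μ 1) P) (B : Set Ω) :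
    ∫ ω in B, r2 γ α μ (ξ ω) ∂P ≤ riskConst Λ * (τ ^ 2 + 1) * √(P.real B) := by
  have := hξ.isProbabilityMeasure
  have hR := slabSpread_pos Λ
  set D : ℝ := 8 * τ ^ 2 + 8 * exp (Λ ^ 2 / 2) + 2 * slabSpread Λ
  have hnoise : IntegrableOn (fun ω => 4 * (ξ ω - μ) ^ 2) B P :=
    ((memLp_two_sq_sub hξ).integrable one_le_two).integrableOn.const_mul 4
  have hp : P.real B ≤ √(P.real B) := le_sqrt_self_iff.2 measureReal_le_one
  calc ∫ ω in B, r2 γ α μ (ξ ω) ∂P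
      ≤ ∫ ω in B, (D + 4 * (ξ ω - μ) ^ 2) ∂P :=
        integral_mono_of_nonneg (ae_of_all _ fun _ => integral_nonneg fun _ => sq_nonneg _)
          ((integrable_const D).add hnoise)
          (ae_of_all _ fun ω => h.r2_le_of_medianZero_imp hα hτ μ (ξ ω))
    _ = D * P.real B + 4 * ∫ ω in B, (ξ ω - μ) ^ 2 ∂P := by
        rw [integral_add (integrable_const D) hnoise, integral_const_mul, setIntegral_const,
          smul_eq_mul, mul_comm]
    _ ≤ D * √(P.real B) + 4 * (√gaussianFourthMoment * √(P.real B)) := by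
        gcongr
        exact setIntegral_sq_sub_le hξ B
    _ = (D + 4 * √gaussianFourthMoment) * √(P.real B) := by ring
    _ ≤ riskConst Λ * (τ ^ 2 + 1) * √(P.real B) := by
        gcongr
        have : 0 ≤ τ ^ 2 *
            (8 * exp (Λ ^ 2 / 2) + 2 * slabSpread Λ + 4 * √gaussianFourthMoment) := by positivity
        unfold riskConst
        linarith

/-! ### The Cauchy slab -/

lemma cauchyDen_pos (x : ℝ) : 0 < cauchyDen x := by
  unfold cauchyDen
  positivity

lemma lipschitzWith_log_one_add_sq : LipschitzWith 1 fun x : ℝ => log (1 + x ^ 2) := by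
  have hderiv (x : ℝ) : HasDerivAt (fun x : ℝ => log (1 + x ^ 2)) (2 * x / (1 + x ^ 2)) x := by
    simpa using ((hasDerivAt_pow 2 x).const_add 1).log (by positivity)
  refine lipschitzWith_of_nnnorm_deriv_le (fun x => (hderiv x).differentiableAt) fun x => ?_
  rw [(hderiv x).deriv, ← NNReal.coe_le_coe, coe_nnnorm, NNReal.coe_one, Real.norm_eq_abs,
    abs_div, abs_of_pos (by positivity : 0 < 1 + x ^ 2), div_le_one (by positivity), abs_le]
  constructor <;> linarith [sq_nonneg (x + 1), sq_nonneg (x - 1)]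

lemma isLogLipschitz_cauchyDen : IsLogLipschitz cauchyDen 1 where
  pos := cauchyDen_pos
  lipschitzWith_log := by
    have hlog (x : ℝ) : log (cauchyDen x) = -log π - log (1 + x ^ 2) := by
      rw [cauchyDen, log_inv, log_mul pi_ne_zero (by positivity), neg_add']
    simp only [hlog]
    simpa using (LipschitzWith.const (-log π)).sub lipschitzWith_log_one_add_sq

lemma hasLaw_eval_Pdata {n : ℕ} (θ : Fin n → ℝ) (i : Fin n) :
    HasLaw (fun X : Fin n → ℝ => X i) (gaussianReal (θ i) 1) (Pdata n θ) :=
  (measurePreserving_eval (fun j => gaussianReal (θ j) 1) i).hasLaw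

end

/-- Lemma: risk bound on the event `B = {t̂ > t_n}`.
With `t̂ = t(ĥα)`, `t_n² = 2 log n - 5 log log n`, `t_A = √(2(1+A) log n)` and
`α_A = t⁻¹(t_A)`, for every real `μ` (the mean of the observed coordinate),
`E_μ[r₂(α_A, μ, x) 1_B] ≤ C (t_A² + 1) P(B)^{1/2}` for a universal `C`. -/
theorem risk_bound_large_threshold_event :
    ∃ C > (0 : ℝ), ∀ A : ℝ, 0 ≤ A → ∀ n : ℕ, 3 ≤ n →
      ∀ t : ℝ → ℝ, IsThreshold cauchyDen t →
      ∀ αn : ℝ, αn ∈ Set.Ioo (0 : ℝ) 1 → t αn = Real.sqrt (2 * Real.log n) →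
      ∀ hahat : (Fin n → ℝ) → ℝ, IsMMLE cauchyDen αn hahat →
      ∀ αA : ℝ, αA ∈ Set.Ioo (0 : ℝ) 1 →
        t αA = Real.sqrt (2 * (1 + A) * Real.log n) →
      ∀ θ : Fin n → ℝ, ∀ i : Fin n, ∀ μ : ℝ, θ i = μ →
        (∫ X in {X : Fin n → ℝ |
            Real.sqrt (2 * Real.log n - 5 * Real.log (Real.log n)) < t (hahat X)},
            r2 cauchyDen αA μ (X i) ∂(Pdata n θ)) ≤
          C * (2 * (1 + A) * Real.log n + 1) *
            Real.sqrt ((Pdata n θ {X : Fin n → ℝ |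
              Real.sqrt (2 * Real.log n - 5 * Real.log (Real.log n)) < t (hahat X)}).toReal) := by
  refine ⟨riskConst 1, riskConst_pos 1, ?_⟩
  intro A hA n _ t ht αn _ _ hahat _ αA hαA htA θ i μ hμ
  have hsq : t αA ^ 2 = 2 * (1 + A) * Real.log n := by
    rw [htA, sq_sqrt (mul_nonneg (by linarith) (log_natCast_nonneg n))]
  rw [← hsq, ← hμ]
  exact risk_bound_large_threshold_event_general isLogLipschitz_cauchyDen
    (Ioo_subset_Icc_self hαA) (fun y => ((ht αA hαA).2 y).1) (hasLaw_eval_Pdata θ i) _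

end
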